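/- Let R be a regular domain with a generalized regular system of parameters x = x_1,…,x_p, and let I ⊆ R be an ideal. The following are equivalent: (1) the integral closure I̅ is a monomial ideal in x; (2) I_0 ⊆ I̅; (3) I̅ = {f ∈ R : Γ_x(f) ⊆ Γ_x(I)}; (4) Γ_x(I) = Γ_x(K_I), where K_I is the ideal generated by the monomials of R that lie in I̅. -/

import Mathlib

open Ideal Set Pointwise

noncomputable section

namespace NND

variable {R : Type*} [CommRing R] {p : ℕ}

/-- The monomial `x^a = x 0 ^ a 0 * ⋯` in the elements `x`. -/
def mono (x : Fin p → R) (a : Fin p → ℕ) : R := ∏ i, x i ^ a i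

/-- A (commutative) ring is regular local if it is Noetherian local and its maximal ideal
can be generated by `dim R` elements. -/
def IsRegularLocal (A : Type*) [CommRing A] : Prop :=
  IsNoetherianRing A ∧ ∃ h : IsLocalRing A, ∃ s : Finset A,
    Ideal.span (s : Set A) = @IsLocalRing.maximalIdeal A _ h ∧
    (s.card : WithBot (WithTop ℕ)) = ringKrullDim A

/-- A regular domain: an integral domain whose localization at every prime is regular local. -/
def IsRegularDomain (A : Type*) [CommRing A] : Prop :=
  IsDomain A ∧ ∀ (P : Ideal A) (hP : P.IsPrime), IsRegularLocal (@Localization.AtPrime A _ P hP)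

/-- `x` is a regular sequence. -/
def IsRegSeq (x : Fin p → R) : Prop :=
  Ideal.span (Set.range x) ≠ ⊤ ∧
  ∀ i : Fin p, ∀ r : R, r * x i ∈ Ideal.span (x '' {j | j < i}) →
    r ∈ Ideal.span (x '' {j | j < i})

/-- A generalized regular system of parameters: a permutable regular sequence all of whose
subquotients are regular domains. -/
def IsGRSOP (x : Fin p → R) : Prop :=
  (∀ σ : Equiv.Perm (Fin p), IsRegSeq (x ∘ σ)) ∧
  ∀ S : Set (Fin p), IsRegularDomain (R ⧸ Ideal.span (x '' S))

/-- `A` is the exponent set of a monomial representation of `f`: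
`h * f = ∑_{a ∈ A} r a * x^a` with `h` and the `r a` outside `(x_1, …, x_p)`. -/
def IsMonRep (x : Fin p → R) (f : R) (A : Finset (Fin p → ℕ)) : Prop :=
  ∃ (h : R) (r : (Fin p → ℕ) → R),
    h ∉ Ideal.span (Set.range x) ∧ (∀ a ∈ A, r a ∉ Ideal.span (Set.range x)) ∧
    h * f = ∑ a ∈ A, r a * mono x a

/-- A minimal (irredundant) monomial representation: no monomial divides another. -/
def IsMinMonRep (x : Fin p → R) (f : R) (A : Finset (Fin p → ℕ)) : Prop :=
  IsMonRep x f A ∧ ∀ a ∈ A, ∀ b ∈ A, a ≠ b → ¬ mono x a ∣ mono x b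

open Classical in
/-- The support of `f`: the exponent set of its (unique) minimal monomial representation. -/
def supp (x : Fin p → R) (f : R) : Set (Fin p → ℕ) :=
  if h : ∃ A : Finset (Fin p → ℕ), IsMinMonRep x f A then ↑h.choose else ∅

/-- Embedding of exponent vectors into `ℝ^p`. -/
def toR (a : Fin p → ℕ) : Fin p → ℝ := fun i => (a i : ℝ)

/-- The Newton polyhedron of a set of ring elements. -/
def Γ (x : Fin p → R) (S : Set R) : Set (Fin p → ℝ) :=
  convexHull ℝ (toR '' ⋃ f ∈ S, supp x f)

/-- The Newton polyhedron `Γ_x(I)` of an ideal. -/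
def ΓI (x : Fin p → R) (I : Ideal R) : Set (Fin p → ℝ) := Γ x (I : Set R)

/-- The Newton polyhedron `Γ_x(f)` of an element: that of the principal ideal `(f)`. -/
def ΓE (x : Fin p → R) (f : R) : Set (Fin p → ℝ) := ΓI x (Ideal.span {f})

/-- The integral closure of an ideal `I`: elements satisfying an equation of integral
dependence `f^n + a_1 f^{n-1} + ⋯ + a_n = 0` with `a_i ∈ I^i`. -/
def intClosure (I : Ideal R) : Set R :=
  {f | ∃ n : ℕ, 0 < n ∧ ∃ a : ℕ → R, (∀ i ∈ Finset.Icc 1 n, a i ∈ I ^ i) ∧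
    f ^ n + ∑ i ∈ Finset.Icc 1 n, a i * f ^ (n - i) = 0}

/-- The monomial ideal `I_0` spanned by the lattice points of `Γ_x(I)`. -/
def idealZero (x : Fin p → R) (I : Ideal R) : Ideal R :=
  Ideal.span (mono x '' {a | toR a ∈ ΓI x I})

/-- The ideal `K_I` generated by the monomials lying in the integral closure of `I`. -/
def KIdeal (x : Fin p → R) (I : Ideal R) : Ideal R :=
  Ideal.span {m | (∃ a : Fin p → ℕ, m = mono x a) ∧ m ∈ intClosure I}

/-! ### Monomial ideals -/

/-- The monomial ideal of a set of exponents. -/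
def J (x : Fin p → R) (U : Set (Fin p → ℕ)) : Ideal R := Ideal.span (mono x '' U)

/-- The shifted exponent set. -/
def shift (U : Set (Fin p → ℕ)) (b : Fin p → ℕ) : Set (Fin p → ℕ) := {a | a + b ∈ U}

/-- restriction of exponent vectors -/
def restr (T : Finset (Fin p)) (a : Fin p → ℕ) : Fin p → ℕ := fun i => if i ∈ T then a i else 0

lemma mono_add (x : Fin p → R) (a b : Fin p → ℕ) : mono x (a + b) = mono x a * mono x b := by
  simp [mono, pow_add, Finset.prod_mul_distrib]

lemma mono_zero (x : Fin p → R) : mono x 0 = 1 := by simp [mono]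

lemma mono_single (x : Fin p → R) (i : Fin p) : mono x (Pi.single i 1) = x i := by
  rw [mono, Finset.prod_eq_single i]
  · simp
  · intro j _ hj; simp [hj]
  · simp

lemma mono_mem_J (x : Fin p → R) {U : Set (Fin p → ℕ)} {a} (ha : a ∈ U) : mono x a ∈ J x U :=
  Ideal.subset_span ⟨a, ha, rfl⟩

lemma J_mono (x : Fin p → R) {U V : Set (Fin p → ℕ)} (h : U ⊆ V) : J x U ≤ J x V :=
  Ideal.span_mono (Set.image_mono h)

lemma mul_mem_J (x : Fin p → R) {U V W : Set (Fin p → ℕ)} (h : ∀ a ∈ U, ∀ b ∈ V, a + b ∈ W)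
    {f g : R} (hf : f ∈ J x U) (hg : g ∈ J x V) : f * g ∈ J x W := by
  have : J x U * J x V ≤ J x W := by
    rw [J, J, Ideal.span_mul_span', Ideal.span_le]
    rintro _ ⟨_, ⟨a, ha, rfl⟩, _, ⟨b, hb, rfl⟩, rfl⟩
    simp only [← mono_add]
    exact mono_mem_J x (h a ha b hb)
  exact this (Ideal.mul_mem_mul hf hg)

lemma shift_upper {U : Set (Fin p → ℕ)} (hU : IsUpperSet U) (b) : IsUpperSet (shift U b) :=
  fun _ _ h h' => hU (add_le_add_left h b) h'

lemma subset_shift {U : Set (Fin p → ℕ)} (hU : IsUpperSet U) (b) : U ⊆ shift U b :=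
  fun a h' => hU (le_self_add : a ≤ a + b) h'

lemma eq_add_single {a : Fin p → ℕ} {i : Fin p} (h : a i ≠ 0) :
    ∃ a' : Fin p → ℕ, a = a' + Pi.single i 1 := by
  refine ⟨a - Pi.single i 1, ?_⟩
  funext j
  by_cases hj : j = i
  · subst hj; simp; omega
  · simp [hj]

lemma exists_ne_zero {a : Fin p → ℕ} (h : a ≠ 0) : ∃ i, a i ≠ 0 := by
  by_contra! h'; exact h (funext h')

/-- noetherianity of upper sets -/
lemma upper_wf : WellFounded (fun V U : Set (Fin p → ℕ) => IsUpperSet U ∧ U ⊂ V) := by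
  rw [wellFounded_iff_isEmpty_descending_chain]
  refine ⟨fun ⟨u, hu⟩ => ?_⟩
  have hm : Monotone u := monotone_nat_of_le_succ fun n => (hu n).2.1
  choose a ha hna using fun n => Set.exists_of_ssubset (hu n).2
  obtain ⟨m, n, hmn, hle⟩ := wellQuasiOrdered_le a
  exact hna n (hm (Nat.succ_le_of_lt hmn) ((hu (m + 1)).1 hle (ha m)))

/-- a claim about non-zero-divisors modulo monomial ideals -/
def NZD (x : Fin p → R) (T : Finset (Fin p)) : Prop :=
  ∀ U : Set (Fin p → ℕ), IsUpperSet U → (∀ a ∈ U, restr T a ∈ U) →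
    ∀ h : R, h ∉ Ideal.span (x '' (T : Set (Fin p))) → ∀ f, h * f ∈ J x U → f ∈ J x U

lemma restr_le (T : Finset (Fin p)) (a : Fin p → ℕ) : restr T a ≤ a := by
  intro i; simp only [restr]; split_ifs <;> simp

lemma restr_add (T : Finset (Fin p)) (a b : Fin p → ℕ) :
    restr T (a + b) = restr T a + restr T b := by
  funext i; simp only [restr, Pi.add_apply]; split_ifs <;> simp

lemma restr_mono (T : Finset (Fin p)) {a b : Fin p → ℕ} (h : a ≤ b) : restr T a ≤ restr T b := by
  intro i; simp only [restr]; split_ifs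
  · exact h i
  · exact le_rfl

lemma colon_single (x : Fin p → R) {T : Finset (Fin p)} {i : Fin p}
    (hT : NZD x (T.erase i)) (hi : x i ∉ Ideal.span (x '' (T.erase i : Set (Fin p))))
    {U : Set (Fin p → ℕ)} (hU : IsUpperSet U) (hUT : ∀ a ∈ U, restr T a ∈ U)
    {f : R} (hf : x i * f ∈ J x U) : f ∈ J x (shift U (Pi.single i 1)) := by
  set U0 : Set (Fin p → ℕ) := {a | restr (T.erase i) a ∈ U} with hU0
  have h0u : IsUpperSet U0 := fun a b hab ha => hU (restr_mono _ hab) ha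
  have h0U : U0 ⊆ U := fun a ha => hU (restr_le _ _) ha
  have key : ∀ y ∈ J x U, ∃ g ∈ J x (shift U (Pi.single i 1)), y - x i * g ∈ J x U0 := by
    intro y hy
    refine Submodule.span_induction ?_ ?_ ?_ ?_ hy
    · rintro _ ⟨a, ha, rfl⟩
      by_cases hai : a i = 0
      · refine ⟨0, zero_mem _, ?_⟩
        have : restr (T.erase i) a = restr T a := by
          funext j
          simp only [restr, Finset.mem_erase]
          by_cases hj : j = i
          · subst hj; simp [hai]
          · simp [hj]
        have h1 : a ∈ U0 := by
          simp only [hU0, Set.mem_ofPred_eq, this]; exact hUT a ha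
        simpa using mono_mem_J x h1
      · obtain ⟨a', rfl⟩ := eq_add_single hai
        refine ⟨mono x a', mono_mem_J x ha, ?_⟩
        rw [mono_add, mono_single, mul_comm, sub_self]
        exact zero_mem _
    · exact ⟨0, zero_mem _, by simp⟩
    · rintro y z _ _ ⟨g, hg, h⟩ ⟨g', hg', h'⟩
      refine ⟨g + g', add_mem hg hg', ?_⟩
      have := add_mem h h'
      convert this using 1; ring
    · rintro r y _ ⟨g, hg, h⟩
      refine ⟨r * g, Ideal.mul_mem_left _ _ hg, ?_⟩
      have := Ideal.mul_mem_left _ r h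
      convert this using 1; simp; ring
  obtain ⟨g, hg, h⟩ := key _ hf
  rw [← mul_sub] at h
  have h2 := hT U0 h0u (fun a ha => by
    have : restr (T.erase i) (restr (T.erase i) a) = restr (T.erase i) a := by
      funext j; simp only [restr]; split_ifs <;> rfl
    simpa [hU0, this] using ha) _ hi _ h
  have h3 := J_mono x (h0U.trans (subset_shift hU (Pi.single i 1))) h2
  simpa using add_mem h3 hg

lemma colon_mono (x : Fin p → R) {T : Finset (Fin p)}
    (hT : ∀ i ∈ T, NZD x (T.erase i))
    (hi : ∀ i ∈ T, x i ∉ Ideal.span (x '' (T.erase i : Set (Fin p))))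
    (n : ℕ) : ∀ (b : Fin p → ℕ), ∑ i, b i = n → (∀ i, i ∉ T → b i = 0) →
    ∀ U : Set (Fin p → ℕ), IsUpperSet U → (∀ a ∈ U, restr T a ∈ U) →
    ∀ f : R, mono x b * f ∈ J x U → f ∈ J x (shift U b) := by
  induction n with
  | zero =>
    intro b hb _ U hU hUT f hf
    have : b = 0 := by
      funext i
      have := (Finset.sum_eq_zero_iff.mp hb) i (Finset.mem_univ _)
      simpa using this
    subst this
    rw [mono_zero, one_mul] at hf
    exact J_mono x (subset_shift hU _) hf
  | succ n ih =>
    intro b hb hbT U hU hUT f hf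
    have hb0 : b ≠ 0 := by rintro rfl; simp at hb
    obtain ⟨i, hbi⟩ := exists_ne_zero hb0
    have hiT : i ∈ T := by by_contra h; exact hbi (hbT i h)
    obtain ⟨b', rfl⟩ := eq_add_single hbi
    rw [mono_add, mono_single, mul_comm (mono x b'), mul_assoc] at hf
    have h1 := colon_single x (hT i hiT) (hi i hiT) hU hUT hf
    have h2 := ih b' (by
        have : ∑ j, (Pi.single i 1 : Fin p → ℕ) j = 1 := by simp
        simp only [Pi.add_apply, Finset.sum_add_distrib, this] at hb; omega)
      (fun j hj => by have := hbT j hj; simp at this; exact this.1) _ (shift_upper hU _)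
      (fun a ha => by
        simp only [shift, Set.mem_ofPred_eq] at ha ⊢
        have := hUT _ ha
        rw [restr_add] at this
        exact hU (add_le_add_right (restr_le _ _) _) this) f h1
    refine J_mono x ?_ h2
    intro a ha
    simp only [shift, Set.mem_ofPred_eq] at ha ⊢
    rwa [← add_assoc]

lemma J_le_of (x : Fin p → R) {U : Set (Fin p → ℕ)} {S : Set (Fin p)}
    (h : ∀ a ∈ U, ∃ i ∈ S, a i ≠ 0) : J x U ≤ Ideal.span (x '' S) := by
  rw [J, Ideal.span_le]
  rintro _ ⟨a, ha, rfl⟩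
  obtain ⟨i, hi, hai⟩ := h a ha
  obtain ⟨a', rfl⟩ := eq_add_single hai
  rw [mono_add, mono_single]
  exact Ideal.mul_mem_left _ _ (Ideal.subset_span ⟨i, hi, rfl⟩)

lemma nzd (x : Fin p → R) (hprime : ∀ S : Set (Fin p), (Ideal.span (x '' S)).IsPrime)
    (hnot : ∀ (i : Fin p) (S : Set (Fin p)), i ∉ S → x i ∉ Ideal.span (x '' S))
    (T : Finset (Fin p)) : NZD x T := by
  induction T using Finset.strongInduction with
  | H T ihT =>
    have hc := colon_mono x (fun i hi => ihT _ (Finset.erase_ssubset hi))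
      (fun i hi => hnot i _ (by simp))
    intro U
    induction U using upper_wf.induction with
    | _ U ih =>
      intro hU hUT h hh f hf
      by_cases h0 : (0 : Fin p → ℕ) ∈ U
      · have : (1 : R) ∈ J x U := by rw [← mono_zero x]; exact mono_mem_J x h0
        rw [(Ideal.eq_top_iff_one _).2 this]; trivial
      -- choose b with maximal colon
      obtain ⟨V, ⟨b, hbU, hbT, rfl⟩, hmax⟩ := (upper_wf (p := p)).has_min
        {V | ∃ b, b ∉ U ∧ (∀ i, i ∉ T → b i = 0) ∧ V = shift U b} ⟨_, 0, h0, by simp, rfl⟩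
      have hstep : ∀ i ∈ T, Pi.single i 1 ∉ shift U b →
          shift U (b + Pi.single i 1) = shift U b := by
        intro i hi hn
        by_contra hne
        refine hmax (shift U (b + Pi.single i 1)) ⟨_, ?_, ?_, rfl⟩ ⟨shift_upper hU _, ?_⟩
        · rw [add_comm]; exact hn
        · intro j hj
          have : j ≠ i := fun h => hj (h ▸ hi)
          simp [hbT j hj, this]
        · refine LE.le.ssubset_of_ne ?_ (Ne.symm hne)
          intro a ha
          simp only [shift, Set.mem_ofPred_eq] at ha ⊢
          rw [← add_assoc]; exact hU le_self_add ha
      have hshT : ∀ a ∈ shift U b, restr T a ∈ shift U b := by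
        intro a ha
        simp only [shift, Set.mem_ofPred_eq] at ha ⊢
        have := hUT _ ha
        rw [restr_add] at this
        exact hU (add_le_add_right (restr_le _ _) _) this
      have hgen : ∀ n, ∀ a ∈ shift U b, ∑ i, a i = n →
          ∃ i ∈ {i | i ∈ T ∧ Pi.single i 1 ∈ shift U b}, a i ≠ 0 := by
        intro n
        induction n with
        | zero =>
          intro a ha hs
          have : a = 0 := by
            funext i
            have := (Finset.sum_eq_zero_iff.mp hs) i (Finset.mem_univ _)
            simpa using this
          subst this
          exact absurd (by simpa [shift] using ha) hbU
        | succ n ihn =>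
          intro a ha hs
          by_cases hr : restr T a = 0
          · have := hshT a ha
            rw [hr] at this
            exact absurd (by simpa [shift] using this) hbU
          obtain ⟨i, hi⟩ := exists_ne_zero hr
          have hiT : i ∈ T := by by_contra hn; exact hi (by simp [restr, hn])
          have hai : a i ≠ 0 := by simpa [restr, hiT] using hi
          by_cases hin : Pi.single i 1 ∈ shift U b
          · exact ⟨i, ⟨hiT, hin⟩, hai⟩
          obtain ⟨a', rfl⟩ := eq_add_single hai
          have h1 : a' ∈ shift U b := by
            rw [← hstep i hiT hin]
            simp only [shift, Set.mem_ofPred_eq] at ha ⊢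
            rwa [add_comm b, ← add_assoc]
          obtain ⟨j, hj, hj'⟩ := ihn a' h1 (by
            have : ∑ j, (Pi.single i 1 : Fin p → ℕ) j = 1 := by simp
            simp only [Pi.add_apply, Finset.sum_add_distrib, this] at hs; omega)
          exact ⟨j, hj, by simp [hj']⟩
      set S : Set (Fin p) := {i | i ∈ T ∧ Pi.single i 1 ∈ shift U b} with hS
      have hle : J x (shift U b) ≤ Ideal.span (x '' S) := J_le_of x fun a ha => hgen _ a ha rfl
      -- induction for U ∪ Ici b
      have h1 : f ∈ J x (U ∪ Set.Ici b) := by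
        refine ih (U ∪ Set.Ici b) ⟨hU, ?_⟩ (hU.union (isUpperSet_Ici b)) ?_ h hh f
          (J_mono x Set.subset_union_left hf)
        · refine ⟨Set.subset_union_left, fun hsub => hbU (hsub (Or.inr (Set.mem_Ici.2 le_rfl)))⟩
        · rintro a (ha | ha)
          · exact Or.inl (hUT a ha)
          · right
            intro i
            by_cases hi : i ∈ T
            · simpa [restr, hi] using ha i
            · simp [restr, hi, hbT i hi]
      have h2 : ∃ g ∈ J x U, ∃ r, f = g + r * mono x b := by
        have : J x (U ∪ Set.Ici b) ≤ J x U ⊔ Ideal.span {mono x b} := by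
          rw [J, Ideal.span_le]
          rintro _ ⟨a, ha | ha, rfl⟩
          · exact Ideal.mem_sup_left (mono_mem_J x ha)
          · obtain ⟨c, rfl⟩ := exists_add_of_le (show b ≤ a from ha)
            rw [mono_add, mul_comm]
            exact Ideal.mem_sup_right (Ideal.mul_mem_left _ _ (Ideal.subset_span rfl))
        obtain ⟨g, hg, y, hy, rfl⟩ := Submodule.mem_sup.1 (this h1)
        obtain ⟨r, rfl⟩ := Ideal.mem_span_singleton'.1 hy
        exact ⟨g, hg, r, rfl⟩
      obtain ⟨g, hg, r, rfl⟩ := h2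
      have h3 : mono x b * (h * r) ∈ J x U := by
        have := sub_mem hf (Ideal.mul_mem_left _ h hg)
        convert this using 1; ring
      have h4 := hle (hc _ b rfl hbT U hU hUT _ h3)
      have h5 : r ∈ Ideal.span (x '' S) := by
        refine ((hprime S).mem_or_mem h4).resolve_left fun h6 => hh ?_
        exact Ideal.span_mono (Set.image_mono fun i hi => hi.1) h6
      refine add_mem hg ?_
      have h6 : Ideal.span (x '' S) ≤ J x (shift U b) := by
        rw [Ideal.span_le]
        rintro _ ⟨i, hi, rfl⟩
        rw [← mono_single x i]
        exact mono_mem_J x hi.2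
      refine mul_mem_J x (V := {b}) ?_ (h6 h5) (mono_mem_J x rfl)
      rintro a ha _ rfl
      exact ha

/-- The properties of a g.r.s.o.p. that we use. -/
structure Good (x : Fin p → R) : Prop where
  prime : ∀ S : Set (Fin p), (Ideal.span (x '' S)).IsPrime
  not_mem : ∀ (i : Fin p) (S : Set (Fin p)), i ∉ S → x i ∉ Ideal.span (x '' S)
  krull : ∀ (K : Ideal R) (f : R), (∀ n, f ∈ K ⊔ Ideal.span (Set.range x) ^ n) →
    ∃ h, h ∉ Ideal.span (Set.range x) ∧ h * f ∈ K

lemma krull_aux (P : Ideal R) (hPp : P.IsPrime) (hN : IsNoetherianRing (Localization.AtPrime P))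
    (K : Ideal R) (f : R) (hf : ∀ n, f ∈ K ⊔ P ^ n) : ∃ h, h ∉ P ∧ h * f ∈ K := by
  let φ := algebraMap R (Localization.AtPrime P)
  have h1 : φ f ∈ K.map φ := by
    have hcl : ∀ n, Ideal.Quotient.mk (K.map φ) (φ f) ∈
        ((P.map φ).map (Ideal.Quotient.mk (K.map φ))) ^ n := by
      intro n
      have h2 := Ideal.mem_map_of_mem (Ideal.Quotient.mk (K.map φ)) (Ideal.mem_map_of_mem φ (hf n))
      rw [Ideal.map_sup, Ideal.map_sup, Ideal.map_quotient_self, bot_sup_eq,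
        Ideal.map_pow, Ideal.map_pow] at h2
      exact h2
    by_cases htop : K.map φ = ⊤
    · rw [htop]; trivial
    have : Nontrivial (Localization.AtPrime P ⧸ K.map φ) := Ideal.Quotient.nontrivial_iff.2 htop
    have hloc : IsLocalRing (Localization.AtPrime P ⧸ K.map φ) :=
      IsLocalRing.of_surjective' (Ideal.Quotient.mk _) Ideal.Quotient.mk_surjective
    have hne : (P.map φ).map (Ideal.Quotient.mk (K.map φ)) ≠ ⊤ := by
      intro h
      rw [Localization.AtPrime.map_eq_maximalIdeal] at h
      have h4 : IsLocalRing.maximalIdeal (Localization.AtPrime P) ⊔ K.map φ = ⊤ := by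
        have := congrArg (Ideal.comap (Ideal.Quotient.mk (K.map φ))) h
        rw [Ideal.comap_map_of_surjective _ Ideal.Quotient.mk_surjective, Ideal.comap_top,
          ← RingHom.ker_eq_comap_bot, Ideal.mk_ker] at this
        exact this
      rw [sup_eq_left.2 (IsLocalRing.le_maximalIdeal htop)] at h4
      exact (IsLocalRing.maximalIdeal.isMaximal _).ne_top h4
    have hk := Ideal.iInf_pow_eq_bot_of_isLocalRing _ hne
    have h5 : Ideal.Quotient.mk (K.map φ) (φ f) ∈
        ⨅ n : ℕ, ((P.map φ).map (Ideal.Quotient.mk (K.map φ))) ^ n := by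
      rw [Ideal.mem_iInf]; exact hcl
    rw [hk, Ideal.mem_bot, Ideal.Quotient.eq_zero_iff_mem] at h5
    exact h5
  rw [IsLocalization.algebraMap_mem_map_algebraMap_iff P.primeCompl (Localization.AtPrime P)] at h1
  obtain ⟨m, hm, h⟩ := h1
  exact ⟨m, hm, h⟩

lemma good_of (x : Fin p → R) (hR : IsRegularDomain R) (hx : IsGRSOP x) : Good x := by
  have hprime : ∀ S : Set (Fin p), (Ideal.span (x '' S)).IsPrime := fun S =>
    (Ideal.Quotient.isDomain_iff_prime _).1 (hx.2 S).1
  refine ⟨hprime, ?_, ?_⟩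
  · intro i S hiS hmem
    obtain ⟨q, rfl⟩ : ∃ q, p = q + 1 := ⟨p - 1, by have := i.2; omega⟩
    have h := hx.1 (Equiv.swap i (Fin.last q))
    have h2 := h.2 (Fin.last q) 1
    have hset : (x ∘ Equiv.swap i (Fin.last q)) '' {j | j < Fin.last q} = x '' {j | j ≠ i} := by
      rw [Set.image_comp]
      congr 1
      ext j
      constructor
      · rintro ⟨k, hk, rfl⟩ h3
        rw [Equiv.swap_apply_eq_iff, Equiv.swap_apply_left] at h3
        subst h3
        simp at hk
      · intro hj
        refine ⟨Equiv.swap i (Fin.last q) j, ?_, by simp⟩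
        refine lt_of_le_of_ne (Fin.le_last _) fun h3 => hj ?_
        rw [Equiv.swap_apply_eq_iff, Equiv.swap_apply_right] at h3
        exact h3
    rw [hset] at h2
    have h3 : (1 : R) ∈ Ideal.span (x '' {j | j ≠ i}) := by
      apply h2
      simp only [Function.comp, Equiv.swap_apply_right, one_mul]
      have hsub : S ⊆ {j | j ≠ i} := by
        intro j hj
        simp only [Set.mem_ofPred_eq]
        rintro rfl
        exact hiS hj
      exact Ideal.span_mono (Set.image_mono hsub) hmem
    exact (hprime _).ne_top ((Ideal.eq_top_iff_one _).2 h3)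
  · intro K f hf
    have hPp : (Ideal.span (Set.range x)).IsPrime := by rw [← Set.image_univ]; exact hprime _
    exact krull_aux _ hPp (hR.2 _ hPp).1 K f hf

section good

variable {x : Fin p → R}

lemma restr_univ (a : Fin p → ℕ) : restr Finset.univ a = a := by
  funext i; simp [restr]

lemma Good.mem_of_mul (hx : Good x) {U : Set (Fin p → ℕ)} (hU : IsUpperSet U) {h f : R}
    (hh : h ∉ Ideal.span (Set.range x)) (hf : h * f ∈ J x U) : f ∈ J x U :=
  nzd x hx.prime hx.not_mem Finset.univ U hU
    (fun a ha => by rwa [restr_univ]) h (by simpa using hh) f hf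

lemma Good.colon (hx : Good x) {U : Set (Fin p → ℕ)} (hU : IsUpperSet U) {f : R} {b : Fin p → ℕ}
    (hf : mono x b * f ∈ J x U) : f ∈ J x (shift U b) :=
  colon_mono x (T := Finset.univ) (fun i _ => nzd x hx.prime hx.not_mem _)
    (fun i _ => hx.not_mem i _ (by simp)) _ b rfl (by simp) U hU
    (fun a ha => by rwa [restr_univ]) f hf

lemma Good.coeff_mem (hx : Good x) {U : Set (Fin p → ℕ)} (hU : IsUpperSet U) {r : R}
    {b : Fin p → ℕ} (hb : b ∉ U) (hf : r * mono x b ∈ J x U) :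
    r ∈ Ideal.span (Set.range x) := by
  rw [mul_comm] at hf
  rw [← Set.image_univ]
  refine J_le_of x ?_ (hx.colon hU hf)
  intro a ha
  have : a ≠ 0 := by rintro rfl; exact hb (by simpa [shift] using ha)
  obtain ⟨i, hi⟩ := exists_ne_zero this
  exact ⟨i, trivial, hi⟩

lemma Good.primeP (hx : Good x) : (Ideal.span (Set.range x)).IsPrime := by
  rw [← Set.image_univ]; exact hx.prime _

lemma mul_mono_mem (x : Fin p → R) {U : Set (Fin p → ℕ)} {a} (ha : a ∈ U) (r : R) :
    r * mono x a ∈ J x U := Ideal.mul_mem_left _ _ (mono_mem_J x ha)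

lemma Good.minrep_iff (hx : Good x) {f : R} {A : Finset (Fin p → ℕ)} (hA : IsMinMonRep x f A)
    {U : Set (Fin p → ℕ)} (hU : IsUpperSet U) : f ∈ J x U ↔ ↑A ⊆ U := by
  obtain ⟨⟨h, r, hh, hr, hf⟩, hmin⟩ := hA
  constructor
  · intro hfU a ha
    by_contra haU
    classical
    set V : Set (Fin p → ℕ) := U ∪ {b | ∃ c ∈ A.erase a, c ≤ b} with hV
    have hVu : IsUpperSet V := hU.union fun b b' hbb ⟨c, hc, hcb⟩ => ⟨c, hc, hcb.trans hbb⟩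
    have haV : a ∉ V := by
      rintro (h | ⟨c, hc, hca⟩)
      · exact haU h
      · rw [Finset.mem_erase] at hc
        refine hmin c hc.2 a ha hc.1 ?_
        obtain ⟨d, rfl⟩ := exists_add_of_le hca
        rw [mono_add]; exact dvd_mul_right _ _
    refine hr a ha (hx.coeff_mem hVu haV ?_)
    have h1 : r a * mono x a = h * f - ∑ b ∈ A.erase a, r b * mono x b := by
      rw [hf, ← Finset.add_sum_erase _ _ ha]; ring
    rw [h1]
    refine sub_mem (Ideal.mul_mem_left _ _ (J_mono x Set.subset_union_left hfU)) ?_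
    exact Ideal.sum_mem _ fun b hb => mul_mono_mem x (Or.inr ⟨b, hb, le_rfl⟩) _
  · intro hAU
    refine hx.mem_of_mul hU hh ?_
    rw [hf]
    exact Ideal.sum_mem _ fun b hb => mul_mono_mem x (hAU hb) _

lemma exists_minimal_le {U : Set (Fin p → ℕ)} {a} (ha : a ∈ U) :
    ∃ b, Minimal (· ∈ U) b ∧ b ≤ a := by
  obtain ⟨b, hb, hm⟩ := exists_minimal_le_of_wellFoundedLT (· ∈ U) a ha
  exact ⟨b, hm, hb⟩

lemma minimals_finite (U : Set (Fin p → ℕ)) : {b | Minimal (· ∈ U) b}.Finite :=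
  WellQuasiOrderedLE.finite_of_isAntichain (setOfPred_minimal_antichain _)

lemma J_minimals (x : Fin p → R) (U : Set (Fin p → ℕ)) :
    J x U = J x {b | Minimal (· ∈ U) b} := by
  refine le_antisymm ?_ (J_mono x fun b hb => hb.1)
  rw [J, Ideal.span_le]
  rintro _ ⟨a, ha, rfl⟩
  obtain ⟨b, hb, hba⟩ := exists_minimal_le ha
  obtain ⟨c, rfl⟩ := exists_add_of_le hba
  rw [mono_add, mul_comm]
  exact mul_mono_mem x hb _

lemma J_deg (x : Fin p → R) (n : ℕ) :
    J x {a | n ≤ ∑ i, a i} ≤ Ideal.span (Set.range x) ^ n := by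
  rw [J, Ideal.span_le]
  rintro _ ⟨a, ha, rfl⟩
  refine Ideal.pow_le_pow_right ha ?_
  rw [mono, ← Finset.prod_pow_eq_pow_sum]
  exact Ideal.prod_mem_prod fun i _ => Ideal.pow_mem_pow (Ideal.subset_span (Set.mem_range_self i)) _

lemma deg_finite (n : ℕ) : {a : Fin p → ℕ | ∑ i, a i < n}.Finite := by
  refine (Set.finite_Iic (fun _ : Fin p => n)).subset ?_
  intro a ha i
  exact (Finset.single_le_sum (fun j _ => Nat.zero_le (a j)) (Finset.mem_univ i)).trans
    (le_of_lt ha)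

lemma chain_fin {c : Set (Set (Fin p → ℕ))} (hchain : IsChain (· ⊆ ·) c) (hne : c.Nonempty)
    (F : Set (Fin p → ℕ)) (hF : F.Finite) : ∃ s ∈ c, ∀ a ∈ F, a ∈ s → a ∈ ⋂₀ c := by
  induction F, hF using Set.Finite.induction_on with
  | empty => obtain ⟨s, hs⟩ := hne; exact ⟨s, hs, by simp⟩
  | @insert a F _ _ ihF =>
    obtain ⟨s, hs, h⟩ := ihF
    by_cases ha : a ∈ ⋂₀ c
    · refine ⟨s, hs, ?_⟩
      rintro b (rfl | hb) hbs
      · exact ha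
      · exact h b hb hbs
    · obtain ⟨t, ht, hat⟩ : ∃ t ∈ c, a ∉ t := by simpa using ha
      rcases hchain.total hs ht with hst | hts
      · refine ⟨s, hs, ?_⟩
        rintro b (rfl | hb) hbs
        · exact absurd (hst hbs) hat
        · exact h b hb hbs
      · refine ⟨t, ht, ?_⟩
        rintro b (rfl | hb) hbs
        · exact absurd hbs hat
        · exact h b hb (hts hbs)

lemma Good.mem_sInter (hx : Good x) {f : R} {c : Set (Set (Fin p → ℕ))}
    (hc : ∀ U ∈ c, IsUpperSet U ∧ f ∈ J x U)
    (hchain : IsChain (· ⊆ ·) c) (hne : c.Nonempty) : f ∈ J x (⋂₀ c) := by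
  have hup : IsUpperSet (⋂₀ c) := isUpperSet_sInter fun s hs => (hc s hs).1
  obtain ⟨h, hh, hhf⟩ := hx.krull (J x (⋂₀ c)) f (by
    intro n
    obtain ⟨s, hs, h⟩ := chain_fin hchain hne _ (deg_finite n)
    have hsub : s ⊆ ⋂₀ c ∪ {a | n ≤ ∑ i, a i} := by
      intro a ha
      by_cases hn : n ≤ ∑ i, a i
      · exact Or.inr hn
      · exact Or.inl (h a (not_le.1 hn) ha)
    have h1 := J_mono x hsub (hc s hs).2
    have h2 : J x (⋂₀ c ∪ {a | n ≤ ∑ i, a i}) = J x (⋂₀ c) ⊔ J x {a | n ≤ ∑ i, a i} := by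
      rw [J, Set.image_union, Ideal.span_union]; rfl
    rw [h2] at h1
    exact sup_le_sup_left (J_deg x n) _ h1)
  exact hx.mem_of_mul hup hh hhf

lemma Good.exists_min_upper (hx : Good x) (f : R) : ∃ U : Set (Fin p → ℕ), IsUpperSet U ∧
    f ∈ J x U ∧ ∀ V, IsUpperSet V → f ∈ J x V → V ⊆ U → U ⊆ V := by
  obtain ⟨U, hUmin⟩ := zorn_superset {U : Set (Fin p → ℕ) | IsUpperSet U ∧ f ∈ J x U} (by
    intro c hc hchain
    rcases c.eq_empty_or_nonempty with rfl | hne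
    · refine ⟨Set.univ, ⟨isUpperSet_univ, ?_⟩, by simp⟩
      have : (1 : R) ∈ J x Set.univ := by rw [← mono_zero x]; exact mono_mem_J x trivial
      rw [(Ideal.eq_top_iff_one _).2 this]; trivial
    exact ⟨⋂₀ c, ⟨isUpperSet_sInter fun s hs => (hc hs).1,
      hx.mem_sInter (fun U hU => hc hU) hchain hne⟩, fun s hs => Set.sInter_subset_of_mem hs⟩)
  exact ⟨U, hUmin.1.1, hUmin.1.2, fun V hV hf hVU => hUmin.2 ⟨hV, hf⟩ hVU⟩

lemma Good.exists_minrep (hx : Good x) (f : R) : ∃ A : Finset (Fin p → ℕ), IsMinMonRep x f A := by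
  classical
  obtain ⟨U, hU, hfU, hmin⟩ := hx.exists_min_upper f
  obtain ⟨A, hA⟩ := (minimals_finite U).exists_finset_coe
  have hmem : ∀ a, a ∈ A ↔ Minimal (· ∈ U) a := fun a => by
    rw [← Finset.mem_coe, hA]; rfl
  have hfU' := hfU
  rw [J_minimals, ← hA, J, Ideal.span, Submodule.mem_span_image_finset_iff_exists_fun'] at hfU'
  obtain ⟨r, hr⟩ := hfU'
  simp only [smul_eq_mul] at hr
  have hzero : ∀ a ∈ A, r a ∉ Ideal.span (Set.range x) := by
    intro a ha hra
    have haU := (hmem a).1 ha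
    have hV : IsUpperSet (U \ {a}) := by
      rintro b c hbc ⟨hb, hba⟩
      refine ⟨hU hbc hb, ?_⟩
      rintro rfl
      exact hba (haU.eq_of_le hb hbc)
    have h1 : r a * mono x a ∈ J x (U \ {a}) := by
      have h2 : Ideal.span (Set.range x) ≤ J x {b | b ≠ 0} := by
        rw [Ideal.span_le]
        rintro _ ⟨i, rfl⟩
        rw [← mono_single x i]
        refine mono_mem_J x ?_
        simp
      refine mul_mem_J x (V := {a}) ?_ (h2 hra) (mono_mem_J x rfl)
      rintro b hb _ rfl
      refine ⟨hU le_add_self haU.1, ?_⟩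
      simpa using hb
    have h3 : f ∈ J x (U \ {a}) := by
      rw [← hr, ← Finset.add_sum_erase _ _ ha]
      refine add_mem h1 (Ideal.sum_mem _ fun b hb => mul_mono_mem x ?_ _)
      rw [Finset.mem_erase] at hb
      exact ⟨((hmem b).1 hb.2).1, hb.1⟩
    exact (hmin _ hV h3 Set.sdiff_subset haU.1).2 rfl
  have hone : (1 : R) ∉ Ideal.span (Set.range x) := fun h =>
    hx.primeP.ne_top ((Ideal.eq_top_iff_one _).2 h)
  refine ⟨A, ⟨1, r, hone, hzero, by rw [one_mul, hr]⟩, ?_⟩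
  intro a ha b hb hab hdvd
  -- a monomial with exponent a divides the one with exponent b only if a ≤ b
  have h1 : mono x b ∈ J x (Set.Ici a) := by
    obtain ⟨c, hc⟩ := hdvd
    rw [hc, mul_comm]
    exact mul_mono_mem x Set.self_mem_Ici c
  have h2 : a ≤ b := by
    by_contra h
    refine hone (hx.coeff_mem (isUpperSet_Ici a) (b := b) h ?_)
    rwa [one_mul]
  exact hab (((hmem b).1 hb).eq_of_le ((hmem a).1 ha).1 h2)

lemma Good.supp_spec (hx : Good x) (f : R) :
    ∃ A : Finset (Fin p → ℕ), IsMinMonRep x f A ∧ supp x f = ↑A := by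
  have h := hx.exists_minrep f
  exact ⟨h.choose, h.choose_spec, by rw [supp, dif_pos h]⟩

lemma Good.supp_iff (hx : Good x) {f : R} {U : Set (Fin p → ℕ)} (hU : IsUpperSet U) :
    f ∈ J x U ↔ supp x f ⊆ U := by
  obtain ⟨A, hA, hs⟩ := hx.supp_spec f
  rw [hs, hx.minrep_iff hA hU]

lemma Good.minrep_unique (hx : Good x) {f : R} {A B : Finset (Fin p → ℕ)}
    (hA : IsMinMonRep x f A) (hB : IsMinMonRep x f B) : A ⊆ B := by
  have key : ∀ {A B : Finset (Fin p → ℕ)}, IsMinMonRep x f A → IsMinMonRep x f B →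
      ∀ a ∈ A, ∃ b ∈ B, b ≤ a := by
    intro A B hA hB a ha
    have hu : IsUpperSet {c : Fin p → ℕ | ∃ b ∈ B, b ≤ c} :=
      fun c d hcd ⟨b, hb, hbc⟩ => ⟨b, hb, hbc.trans hcd⟩
    exact (hx.minrep_iff hA hu).1 ((hx.minrep_iff hB hu).2 fun b hb => ⟨b, hb, le_rfl⟩) ha
  intro a ha
  obtain ⟨b, hb, hba⟩ := key hA hB a ha
  obtain ⟨c, hc, hcb⟩ := key hB hA b hb
  have hca : c = a := by
    by_contra hne
    refine hA.2 c hc a ha hne ?_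
    obtain ⟨d, rfl⟩ := exists_add_of_le (hcb.trans hba)
    rw [mono_add]; exact dvd_mul_right _ _
  subst hca
  rwa [← le_antisymm hba hcb]

/-- the support of `x^b f` -/
lemma Good.supp_mul_mono (hx : Good x) {f : R} (b : Fin p → ℕ) {a : Fin p → ℕ}
    (ha : a ∈ supp x f) : a + b ∈ supp x (f * mono x b) := by
  classical
  obtain ⟨A, hA, hs⟩ := hx.supp_spec f
  obtain ⟨B, hB, hs'⟩ := hx.supp_spec (f * mono x b)
  rw [hs'] 
  have hA' : IsMinMonRep x (f * mono x b) (A.image (· + b)) := by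
    have hone : (1 : R) ∉ Ideal.span (Set.range x) := fun h =>
      hx.primeP.ne_top ((Ideal.eq_top_iff_one _).2 h)
    obtain ⟨⟨h, r, hh, hr, hf⟩, hmin⟩ := hA
    refine ⟨⟨h, fun c => r (c - b), hh, ?_, ?_⟩, ?_⟩
    · intro c hc
      obtain ⟨d, hd, rfl⟩ := Finset.mem_image.1 hc
      simpa using hr d hd
    · rw [Finset.sum_image (by intro c _ d _ h; exact add_right_cancel h), ← mul_assoc, hf,
        Finset.sum_mul]
      refine Finset.sum_congr rfl fun c _ => ?_
      simp [mono_add, mul_assoc]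
    · intro c hc d hd hcd hdvd
      obtain ⟨c, hc', rfl⟩ := Finset.mem_image.1 hc
      obtain ⟨d, hd', rfl⟩ := Finset.mem_image.1 hd
      refine hmin c hc' d hd' (fun h => hcd (by rw [h])) ?_
      have h1 : c + b ≤ d + b := by
        by_contra h
        refine hone (hx.coeff_mem (isUpperSet_Ici (c + b)) (b := d + b) h ?_)
        obtain ⟨e, he⟩ := hdvd
        rw [one_mul, he, mul_comm]
        exact mul_mono_mem x Set.self_mem_Ici e
      obtain ⟨e, rfl⟩ := exists_add_of_le (le_of_add_le_add_right h1)
      rw [mono_add]; exact dvd_mul_right _ _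
  refine hx.minrep_unique hA' hB (Finset.mem_image.2 ⟨a, ?_, rfl⟩)
  rw [hs] at ha; exact ha

end good

/-! ### Integral closure -/

open Polynomial in
lemma mem_intClosure_iff (I : Ideal R) (f : R) :
    f ∈ intClosure I ↔ IsIntegral (reesAlgebra I) (Polynomial.monomial 1 f : R[X]) := by
  constructor
  · rintro ⟨n, hn, a, ha, h⟩
    -- the equation in `R[X]`
    set c : ℕ → reesAlgebra I := fun i => if h : i ∈ Finset.Icc 1 n then
      ⟨Polynomial.monomial i (a i), reesAlgebra.monomial_mem.2 (ha i h)⟩ else 0 with hc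
    have hdeg : (∑ i ∈ Finset.Icc 1 n, Polynomial.C (c i) * Polynomial.X ^ (n - i)).degree <
        (n : WithBot ℕ) := by
      refine (Polynomial.degree_sum_le _ _).trans_lt ?_
      refine (Finset.sup_lt_iff (WithBot.bot_lt_coe n)).2 ?_
      intro i hi
      refine (Polynomial.degree_C_mul_X_pow_le _ _).trans_lt ?_
      rw [Finset.mem_Icc] at hi
      exact WithBot.coe_lt_coe.2 (by omega : n - i < n)
    refine ⟨Polynomial.X ^ n + ∑ i ∈ Finset.Icc 1 n, Polynomial.C (c i) * Polynomial.X ^ (n - i),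
      Polynomial.monic_X_pow_add hdeg, ?_⟩
    rw [Polynomial.eval₂_add, Polynomial.eval₂_X_pow, Polynomial.eval₂_finsetSum,
      Polynomial.monomial_pow, one_mul]
    have : ∀ i ∈ Finset.Icc 1 n, Polynomial.eval₂ (algebraMap (reesAlgebra I) R[X])
        (Polynomial.monomial 1 f) (Polynomial.C (c i) * Polynomial.X ^ (n - i)) =
        Polynomial.monomial n (a i * f ^ (n - i)) := by
      intro i hi
      rw [Polynomial.eval₂_mul, Polynomial.eval₂_C, Polynomial.eval₂_X_pow,
        Polynomial.monomial_pow, one_mul]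
      have h1 : algebraMap (reesAlgebra I) R[X] (c i) = Polynomial.monomial i (a i) := by
        simp only [hc, dif_pos hi]; rfl
      rw [Finset.mem_Icc] at hi
      rw [h1, Polynomial.monomial_mul_monomial, Nat.add_sub_cancel' hi.2]
    rw [Finset.sum_congr rfl this, ← map_sum, ← map_add, h, map_zero]
  · rcases subsingleton_or_nontrivial R with hs | hs
    · exact fun _ => ⟨1, one_pos, 0, fun i _ => zero_mem _, Subsingleton.elim _ _⟩
    rintro ⟨P, hP, h⟩
    -- make the degree positive
    wlog hpos : 0 < P.natDegree generalizing P
    · refine this (Polynomial.X * P) (Polynomial.monic_X.mul hP) ?_ ?_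
      · rw [Polynomial.eval₂_mul, h, mul_zero]
      · rw [Polynomial.natDegree_X_mul hP.ne_zero]; omega
    refine ⟨P.natDegree, hpos, fun i => (P.coeff (P.natDegree - i) : R[X]).coeff i, ?_, ?_⟩
    · intro i _
      exact (mem_reesAlgebra_iff I _).1 (P.coeff (P.natDegree - i)).2 i
    · rw [Polynomial.eval₂_eq_sum_range, Finset.sum_range_succ] at h
      have h1 := congrArg (fun q => Polynomial.coeff q P.natDegree) h
      simp only [Polynomial.coeff_add, Polynomial.finsetSum_coeff, Polynomial.coeff_zero,
        Polynomial.monomial_pow, one_mul, hP.coeff_natDegree, map_one,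
        Polynomial.coeff_monomial, if_true] at h1
      rw [add_comm, ← h1]
      congr 1
      refine Finset.sum_nbij' (fun i => P.natDegree - i) (fun i => P.natDegree - i) ?_ ?_ ?_ ?_ ?_
      · intro i hi; simp only [Finset.mem_Icc, Finset.mem_range] at *; omega
      · intro i hi; simp only [Finset.mem_Icc, Finset.mem_range] at *; omega
      · intro i hi; simp only [Finset.mem_Icc] at hi; omega
      · intro i hi; simp only [Finset.mem_range] at hi; omega
      · intro i hi
        simp only [Finset.mem_Icc] at hi
        have h2 : P.natDegree = i + (P.natDegree - i) := by omega
        have h3 := Polynomial.coeff_mul_monomial (P.coeff (P.natDegree - i) : R[X])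
          (P.natDegree - i) i (f ^ (P.natDegree - i))
        rw [← h2] at h3
        exact h3.symm

lemma intClosure_mul (I : Ideal R) {f : R} (r : R) (h : f ∈ intClosure I) :
    r * f ∈ intClosure I := by
  obtain ⟨n, hn, a, ha, h⟩ := h
  refine ⟨n, hn, fun i => r ^ i * a i, fun i hi => Ideal.mul_mem_left _ _ (ha i hi), ?_⟩
  have : ∀ i ∈ Finset.Icc 1 n, r ^ i * a i * (r * f) ^ (n - i) = r ^ n * (a i * f ^ (n - i)) := by
    intro i hi
    rw [Finset.mem_Icc] at hi
    rw [mul_pow, ← Nat.add_sub_cancel' hi.2, Nat.add_sub_cancel_left, pow_add]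
    ring
  rw [Finset.sum_congr rfl this, ← Finset.mul_sum, mul_pow, ← mul_add, h, mul_zero]

/-- the integral closure as an ideal -/
def icl (I : Ideal R) : Ideal R where
  carrier := intClosure I
  zero_mem' := by rw [mem_intClosure_iff]; simpa using isIntegral_zero
  add_mem' := by
    intro a b ha hb
    rw [mem_intClosure_iff] at *
    rw [map_add]; exact ha.add hb
  smul_mem' r f hf := intClosure_mul I r hf

lemma coe_icl (I : Ideal R) : (icl I : Set R) = intClosure I := rfl

lemma le_icl (I : Ideal R) : I ≤ icl I := by
  intro f hf
  change f ∈ intClosure I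
  rw [mem_intClosure_iff]
  exact isIntegral_algebraMap (x := (⟨Polynomial.monomial 1 f,
    reesAlgebra.monomial_mem.2 (by simpa using hf)⟩ : reesAlgebra I))

/-- monomials in the integral closure : the convexity property over `ℕ` -/
lemma mono_mem_icl (x : Fin p → R) (I : Ideal R) {ι : Type*} (t : Finset ι)
    (u : ι → Fin p → ℕ) (n : ι → ℕ) (hu : ∀ i ∈ t, mono x (u i) ∈ intClosure I)
    (a : Fin p → ℕ) (hN : 0 < ∑ i ∈ t, n i) (h : (∑ i ∈ t, n i) • a = ∑ i ∈ t, n i • u i) :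
    mono x a ∈ intClosure I := by
  rw [mem_intClosure_iff]
  refine IsIntegral.of_pow hN ?_
  have h1 : ∀ (s : Finset ι), ∏ i ∈ s, (Polynomial.monomial 1 (mono x (u i))) ^ (n i) =
      Polynomial.monomial (∑ i ∈ s, n i) (mono x (∑ i ∈ s, n i • u i)) := by
    intro s
    have hp : ∀ (k : ℕ) (b : Fin p → ℕ), mono x b ^ k = mono x (k • b) := by
      intro k b
      simp [mono, ← Finset.prod_pow, ← pow_mul, mul_comm]
    classical
    induction s using Finset.induction_on with
    | empty => simp [mono_zero]
    | insert i s hi ih =>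
      rw [Finset.prod_insert hi, Finset.sum_insert hi, Finset.sum_insert hi, ih,
        Polynomial.monomial_pow, one_mul, hp, Polynomial.monomial_mul_monomial, mono_add]
  have h2 : (Polynomial.monomial 1 (mono x a)) ^ (∑ i ∈ t, n i) =
      ∏ i ∈ t, (Polynomial.monomial 1 (mono x (u i))) ^ (n i) := by
    rw [h1, ← h, Polynomial.monomial_pow, one_mul]
    congr 1
    simp [mono, ← Finset.prod_pow, ← pow_mul, mul_comm]
  rw [h2]
  refine IsIntegral.prod _ fun i hi => ((mem_intClosure_iff I _).1 (hu i hi)).pow _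

/-! ### Convexity -/

lemma toR_add (a b : Fin p → ℕ) : toR (a + b) = toR a + toR b := by
  funext i; simp [toR]

/-- Lattice points in a convex hull of lattice points are rational convex combinations. -/
lemma lattice_hull {U : Set (Fin p → ℕ)} {a : Fin p → ℕ} (ha : toR a ∈ convexHull ℝ (toR '' U)) :
    ∃ (ι : Type) (t : Finset ι) (u : ι → Fin p → ℕ) (n : ι → ℕ), (∀ i ∈ t, u i ∈ U) ∧
      0 < ∑ i ∈ t, n i ∧ (∑ i ∈ t, n i) • a = ∑ i ∈ t, n i • u i := by
  rw [convexHull_eq] at ha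
  obtain ⟨ι, t, w, z, hw0, hw1, hz, hc⟩ := ha
  rw [Finset.centerMass_eq_of_sum_1 _ _ hw1] at hc
  have hz' : ∀ i, ∃ u : Fin p → ℕ, i ∈ t → u ∈ U ∧ toR u = z i := by
    intro i
    by_cases hi : i ∈ t
    · obtain ⟨u, hu, h⟩ := hz i hi
      exact ⟨u, fun _ => ⟨hu, h⟩⟩
    · exact ⟨0, fun h => absurd h hi⟩
  choose u hu using hz'
  have hcoord : ∀ j, (a j : ℝ) = ∑ i ∈ t, w i * (u i j : ℝ) := by
    intro j
    have := congrFun hc j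
    rw [Finset.sum_apply] at this
    change _ = (a j : ℝ) at this
    rw [← this]
    refine Finset.sum_congr rfl fun i hi => ?_
    rw [← (hu i hi).2]; rfl
  set F : ℕ → ℤ × (Fin p → ℤ) := fun N =>
    ((N : ℤ) - ∑ i ∈ t, (⌊(N : ℝ) * w i⌋₊ : ℤ),
      fun j => (N : ℤ) * a j - ∑ i ∈ t, (⌊(N : ℝ) * w i⌋₊ : ℤ) * u i j) with hF
  have bound : ∀ (c : ι → ℕ) (d : ℕ) (hd : (d : ℝ) = ∑ i ∈ t, w i * (c i : ℝ)) (N : ℕ),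
      (N : ℤ) * d - ∑ i ∈ t, (⌊(N : ℝ) * w i⌋₊ : ℤ) * c i ∈ Set.Icc (0 : ℤ) (∑ i ∈ t, (c i : ℤ)) := by
    intro c d hd N
    have h1 : (((N : ℤ) * d - ∑ i ∈ t, (⌊(N : ℝ) * w i⌋₊ : ℤ) * c i : ℤ) : ℝ) =
        ∑ i ∈ t, ((N : ℝ) * w i - (⌊(N : ℝ) * w i⌋₊ : ℝ)) * c i := by
      push_cast
      rw [hd, Finset.mul_sum, ← Finset.sum_sub_distrib]
      refine Finset.sum_congr rfl fun i _ => ?_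
      ring
    constructor
    · have : (0 : ℝ) ≤ (((N : ℤ) * d - ∑ i ∈ t, (⌊(N : ℝ) * w i⌋₊ : ℤ) * c i : ℤ) : ℝ) := by
        rw [h1]
        refine Finset.sum_nonneg fun i hi => mul_nonneg ?_ (Nat.cast_nonneg _)
        exact sub_nonneg.2 (Nat.floor_le (mul_nonneg (Nat.cast_nonneg _) (hw0 i hi)))
      exact_mod_cast this
    · have : (((N : ℤ) * d - ∑ i ∈ t, (⌊(N : ℝ) * w i⌋₊ : ℤ) * c i : ℤ) : ℝ) ≤
          ((∑ i ∈ t, (c i : ℤ) : ℤ) : ℝ) := by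
        rw [h1]
        push_cast
        refine Finset.sum_le_sum fun i hi => ?_
        have := Nat.lt_floor_add_one ((N : ℝ) * w i)
        have h3 : (N : ℝ) * w i - (⌊(N : ℝ) * w i⌋₊ : ℝ) ≤ 1 := by linarith
        simpa using mul_le_mul_of_nonneg_right h3 (Nat.cast_nonneg (c i))
      exact_mod_cast this
  have hmaps : Set.MapsTo F Set.univ (Set.Icc (0 : ℤ × (Fin p → ℤ))
      (∑ i ∈ t, (1 : ℤ), fun j => ∑ i ∈ t, (u i j : ℤ))) := by
    intro N _
    have h1 := bound (fun _ => 1) 1 (by simp [hw1]) N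
    simp only [Nat.cast_one, mul_one] at h1
    have h2 := fun j => bound (fun i => u i j) (a j) (hcoord j) N
    exact ⟨⟨h1.1, fun j => (h2 j).1⟩, ⟨h1.2, fun j => (h2 j).2⟩⟩
  obtain ⟨N, -, M, -, hne, hNM⟩ := Set.infinite_univ.exists_ne_map_eq_of_mapsTo hmaps
    (by rw [Set.Icc_prod_eq]; exact (Set.finite_Icc _ _).prod (Set.finite_Icc _ _))
  wlog hlt : N < M generalizing N M
  · exact this M N hne.symm hNM.symm (lt_of_le_of_ne (not_lt.1 hlt) hne.symm)
  have hfl : ∀ i ∈ t, ⌊(N : ℝ) * w i⌋₊ ≤ ⌊(M : ℝ) * w i⌋₊ := fun i hi =>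
    Nat.floor_mono (mul_le_mul_of_nonneg_right (by exact_mod_cast hlt.le) (hw0 i hi))
  simp only [hF, Prod.mk.injEq] at hNM
  set n : ι → ℕ := fun i => ⌊(M : ℝ) * w i⌋₊ - ⌊(N : ℝ) * w i⌋₊ with hn
  have hnc : ∀ i ∈ t, (n i : ℤ) = (⌊(M : ℝ) * w i⌋₊ : ℤ) - (⌊(N : ℝ) * w i⌋₊ : ℤ) := by
    intro i hi
    rw [hn]; exact Nat.cast_sub (hfl i hi)
  have hsum : ((∑ i ∈ t, n i : ℕ) : ℤ) = (M : ℤ) - N := by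
    push_cast
    rw [Finset.sum_congr rfl hnc, Finset.sum_sub_distrib]
    linarith [hNM.1]
  refine ⟨ι, t, u, n, fun i hi => (hu i hi).1, by omega, ?_⟩
  funext j
  have h2 := congrFun hNM.2 j
  have : (((∑ i ∈ t, n i) * a j : ℕ) : ℤ) = ((∑ i ∈ t, n i * u i j : ℕ) : ℤ) := by
    rw [Nat.cast_mul, hsum]
    push_cast
    rw [Finset.sum_congr rfl (fun i hi => by rw [hnc i hi, sub_mul]), Finset.sum_sub_distrib]
    linarith
  simpa [Finset.sum_apply] using (by exact_mod_cast this :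
    (∑ i ∈ t, n i) * a j = ∑ i ∈ t, n i * u i j)

lemma hull_add_nat {U : Set (Fin p → ℕ)} (hU : IsUpperSet U) {c : Fin p → ℝ}
    (hc : c ∈ convexHull ℝ (toR '' U)) (b : Fin p → ℕ) : c + toR b ∈ convexHull ℝ (toR '' U) := by
  have hconv : Convex ℝ {c | c + toR b ∈ convexHull ℝ (toR '' U)} :=
    (convex_convexHull ℝ (toR '' U)).translate_preimage_left (toR b)
  refine convexHull_min ?_ hconv hc
  rintro _ ⟨a, ha, rfl⟩
  refine subset_convexHull ℝ _ ⟨a + b, hU le_self_add ha, toR_add a b⟩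

lemma hull_add_real {U : Set (Fin p → ℕ)} (hU : IsUpperSet U) {c : Fin p → ℝ}
    (hc : c ∈ convexHull ℝ (toR '' U)) (b : Fin p → ℝ) (hb : 0 ≤ b) :
    c + b ∈ convexHull ℝ (toR '' U) := by
  have hs : ∀ (i : Fin p) (t : ℝ), 0 ≤ t → ∀ c ∈ convexHull ℝ (toR '' U),
      c + Pi.single i t ∈ convexHull ℝ (toR '' U) := by
    intro i t ht c hc
    obtain ⟨n, hn⟩ := exists_nat_gt t
    have h1 := hull_add_nat hU hc (Pi.single i n)
    have hn0 : (0 : ℝ) < n := ht.trans_lt hn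
    have h2 := (convex_convexHull ℝ (toR '' U)).add_smul_sub_mem hc h1
      (t := t / n) ⟨by positivity, by rw [div_le_one hn0]; exact hn.le⟩
    convert h2 using 1
    funext j
    by_cases hj : j = i
    · subst hj; simp [toR]; field_simp
    · simp [toR, hj]
  have hsum : ∀ s : Finset (Fin p), c + ∑ i ∈ s, Pi.single i (b i) ∈ convexHull ℝ (toR '' U) := by
    intro s
    induction s using Finset.induction_on with
    | empty => simpa using hc
    | insert i s hi ih =>
      have h1 := hs i _ (hb i) _ ih
      rw [Finset.sum_insert hi]
      convert h1 using 1
      abel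
  have := hsum Finset.univ
  rwa [Finset.univ_sum_single] at this

/-- weight of an exponent -/
def wt (w : Fin p → ℝ) (a : Fin p → ℕ) : ℝ := ∑ i, w i * a i

lemma exists_weight {U : Set (Fin p → ℕ)} (hU : IsUpperSet U) {a : Fin p → ℕ}
    (ha : toR a ∉ convexHull ℝ (toR '' U)) :
    ∃ w : Fin p → ℝ, 0 ≤ w ∧ ∀ u ∈ U, wt w a < wt w u := by
  rcases U.eq_empty_or_nonempty with rfl | ⟨u₀, hu₀⟩
  · exact ⟨0, le_rfl, by simp⟩
  set M : Set (Fin p → ℕ) := {b | Minimal (· ∈ U) b} with hM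
  set C : Set (Fin p → ℝ) := convexHull ℝ (toR '' M) + Set.Ici 0 with hC
  have hCcl : IsClosed C :=
    isClosed_Ici.add_left_of_isCompact (((minimals_finite U).image toR).isCompact_convexHull ℝ)
  have hCconv : Convex ℝ C := (convex_convexHull ℝ _).add (convex_Ici 0)
  have hCsub : C ⊆ convexHull ℝ (toR '' U) := by
    rintro _ ⟨c, hc, b, hb, rfl⟩
    refine hull_add_real hU (convexHull_mono (Set.image_mono fun b hb => ?_) hc) b hb
    exact hb.1
  have hUC : ∀ u ∈ U, toR u ∈ C := by
    intro u hu
    obtain ⟨b, hb, hbu⟩ := exists_minimal_le hu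
    obtain ⟨d, rfl⟩ := exists_add_of_le hbu
    rw [toR_add]
    refine Set.add_mem_add (subset_convexHull ℝ _ ⟨b, hb, rfl⟩) ?_
    intro i
    simp [toR]
  obtain ⟨φ, s, h1, h2⟩ := geometric_hahn_banach_point_closed hCconv hCcl (fun h => ha (hCsub h))
  set w : Fin p → ℝ := fun i => φ (Pi.single i 1) with hw
  have hφ : ∀ b, φ (toR b) = wt w b := by
    intro b
    have : toR b = ∑ i, (b i : ℝ) • (Pi.single i 1 : Fin p → ℝ) := by
      funext j
      simp [toR, Finset.sum_apply, Pi.single_apply]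
    rw [this, map_sum, wt]
    refine Finset.sum_congr rfl fun i _ => ?_
    rw [map_smul, smul_eq_mul, mul_comm]
  have hlt : ∀ u ∈ U, wt w a < wt w u := by
    intro u hu
    rw [← hφ, ← hφ]
    exact h1.trans (h2 _ (hUC u hu))
  refine ⟨w, ?_, hlt⟩
  intro i
  by_contra hneg
  rw [Pi.zero_apply, not_le] at hneg
  obtain ⟨n, hn⟩ := exists_nat_gt ((wt w u₀ - wt w a) / (- w i))
  have h3 := hlt (u₀ + Pi.single i n) (hU le_self_add hu₀)
  have h4 : wt w (u₀ + Pi.single i n) = wt w u₀ + w i * n := by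
    simp [wt, mul_add, Finset.sum_add_distrib, Pi.single_apply]
  rw [div_lt_iff₀ (by linarith)] at hn
  rw [h4] at h3
  nlinarith

/-! ### Leading exponents -/

section lead

variable {x : Fin p → R} {Λ : Type*} [AddCommMonoid Λ] [LinearOrder Λ] [IsOrderedCancelAddMonoid Λ]

/-- `α` is the leading exponent of `f` with respect to the order `κ`. -/
def IsLead (x : Fin p → R) (κ : (Fin p → ℕ) →+ Λ) (f : R) (α : Fin p → ℕ) : Prop :=
  ∃ r, r ∉ Ideal.span (Set.range x) ∧ f - r * mono x α ∈ J x {b | κ α < κ b}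

lemma IsLead.mul (hx : Good x) {κ : (Fin p → ℕ) →+ Λ} {f g : R} {α β : Fin p → ℕ}
    (hf : IsLead x κ f α) (hg : IsLead x κ g β) : IsLead x κ (f * g) (α + β) := by
  obtain ⟨r, hr, hf⟩ := hf
  obtain ⟨s, hs, hg⟩ := hg
  refine ⟨r * s, fun h => (hx.primeP.mem_or_mem h).elim hr hs, ?_⟩
  have hg' : g ∈ J x {b | κ β ≤ κ b} := by
    have h1 : s * mono x β ∈ J x {b | κ β ≤ κ b} := mul_mono_mem x (by simp) s
    have h2 := J_mono x (V := {b | κ β ≤ κ b})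
      (fun b (hb : κ β < κ b) => (show κ β ≤ κ b from hb.le)) hg
    simpa using add_mem h2 h1
  have h1 : (f - r * mono x α) * g ∈ J x {b | κ (α + β) < κ b} := by
    refine mul_mem_J x ?_ hf hg'
    intro a ha b hb
    change κ (α + β) < κ (a + b)
    rw [map_add, map_add]; exact add_lt_add_of_lt_of_le ha hb
  have h2 : (r * mono x α) * (g - s * mono x β) ∈ J x {b | κ (α + β) < κ b} := by
    refine mul_mem_J x (U := {α}) ?_ (mul_mono_mem x (Set.mem_singleton α) r) hg
    rintro _ rfl b hb
    change κ (_ + β) < κ (_ + b)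
    rw [map_add, map_add]; exact add_lt_add_right hb _
  have := add_mem h1 h2
  convert this using 1
  rw [mono_add]; ring

lemma IsLead.pow (hx : Good x) {κ : (Fin p → ℕ) →+ Λ} {f : R} {α : Fin p → ℕ}
    (hf : IsLead x κ f α) (n : ℕ) : IsLead x κ (f ^ n) (n • α) := by
  induction n with
  | zero =>
    refine ⟨1, fun h => hx.primeP.ne_top ((Ideal.eq_top_iff_one _).2 h), ?_⟩
    simp [mono_zero]
  | succ n ih =>
    rw [pow_succ, succ_nsmul]; exact ih.mul hx hf

lemma IsLead.not_mem (hx : Good x) {κ : (Fin p → ℕ) →+ Λ} (hκ : Monotone κ) {f : R}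
    {α : Fin p → ℕ} (hf : IsLead x κ f α) : f ∉ J x {b | κ α < κ b} := by
  obtain ⟨r, hr, hf⟩ := hf
  intro h
  have hu : IsUpperSet {b | κ α < κ b} := fun b c hbc hb => lt_of_lt_of_le hb (hκ hbc)
  refine hr (hx.coeff_mem hu (b := α) (by simp) ?_)
  have := sub_mem h hf
  simpa using this

end lead

lemma wt_add (w : Fin p → ℝ) (a b : Fin p → ℕ) : wt w (a + b) = wt w a + wt w b := by
  simp [wt, mul_add, Finset.sum_add_distrib]

lemma wt_mono {w : Fin p → ℝ} (hw : 0 ≤ w) : Monotone (wt w) := fun a b hab =>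
  Finset.sum_le_sum fun i _ => mul_le_mul_of_nonneg_left (by exact_mod_cast hab i) (hw i)

lemma wt_upper {w : Fin p → ℝ} (hw : 0 ≤ w) (c : ℝ) : IsUpperSet {b | c ≤ wt w b} :=
  fun _ _ hab h => le_trans h (wt_mono hw hab)

/-- The total order refining a weight. -/
def kappa (w : Fin p → ℝ) : (Fin p → ℕ) →+ Lex (ℝ × Lex (Fin p → ℕ)) where
  toFun a := toLex (wt w a, toLex a)
  map_zero' := by
    have : wt w 0 = 0 := by simp [wt]
    rw [this]; rfl
  map_add' a b := by rw [wt_add]; rfl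

lemma kappa_mono {w : Fin p → ℝ} (hw : 0 ≤ w) : Monotone (kappa w) := by
  intro a b hab
  change toLex (wt w a, toLex a) ≤ toLex (wt w b, toLex b)
  exact Prod.Lex.toLex_mono ⟨wt_mono hw hab, Pi.toLex_monotone hab⟩

lemma kappa_inj {w : Fin p → ℝ} {a b : Fin p → ℕ} (h : kappa w a = kappa w b) : a = b := by
  have h1 : toLex (wt w a, toLex a) = toLex (wt w b, toLex b) := h
  have h2 := congrArg (fun z => (ofLex z).2) h1
  exact h2

lemma wt_le_of_kappa {w : Fin p → ℝ} {a b : Fin p → ℕ} (h : kappa w a ≤ kappa w b) :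
    wt w a ≤ wt w b := by
  have h1 : toLex (wt w a, toLex a) ≤ toLex (wt w b, toLex b) := h
  rw [Prod.Lex.toLex_le_toLex] at h1
  rcases h1 with h1 | h1
  · exact h1.le
  · exact h1.1.le

lemma kappa_lt_of_wt {w : Fin p → ℝ} {a b : Fin p → ℕ} (h : wt w a < wt w b) :
    kappa w a < kappa w b := by
  by_contra h'
  exact absurd (wt_le_of_kappa (not_lt.1 h')) (not_le.2 h)

lemma pow_mem_wt {x : Fin p → R} {w : Fin p → ℝ} {c : ℝ} {f : R} (hf : f ∈ J x {b | c ≤ wt w b})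
    (n : ℕ) : f ^ n ∈ J x {b | n * c ≤ wt w b} := by
  induction n with
  | zero =>
    rw [pow_zero, ← mono_zero x]
    exact mono_mem_J x (by simp [wt])
  | succ n ih =>
    rw [pow_succ]
    refine mul_mem_J x ?_ ih hf
    intro a ha b hb
    have ha : n * c ≤ wt w a := ha
    have hb : c ≤ wt w b := hb
    change ((n + 1 : ℕ) : ℝ) * c ≤ wt w (a + b)
    rw [wt_add]; push_cast; linarith

lemma ideal_pow_wt {x : Fin p → R} {w : Fin p → ℝ} {c : ℝ} {I : Ideal R}
    (hI : I ≤ J x {b | c < wt w b}) (n : ℕ) :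
    I ^ (n + 1) ≤ J x {b | ((n + 1 : ℕ) : ℝ) * c < wt w b} := by
  induction n with
  | zero => simpa using hI
  | succ n ih =>
    rw [pow_succ, Ideal.mul_le]
    intro f hf g hg
    refine mul_mem_J x ?_ (ih hf) (hI hg)
    intro a ha b hb
    have ha : ((n + 1 : ℕ) : ℝ) * c < wt w a := ha
    have hb : c < wt w b := hb
    change ((n + 1 + 1 : ℕ) : ℝ) * c < wt w (a + b)
    rw [wt_add]; push_cast at ha ⊢; linarith

lemma Good.supp_icl {x : Fin p → R} (hx : Good x) {I : Ideal R} {U : Set (Fin p → ℕ)}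
    (hU : IsUpperSet U) (hI : I ≤ J x U) {f : R} (hf : f ∈ intClosure I) {a : Fin p → ℕ}
    (ha : a ∈ supp x f) : toR a ∈ convexHull ℝ (toR '' U) := by
  classical
  by_contra hna
  obtain ⟨w, hw, hlt⟩ := exists_weight hU hna
  obtain ⟨A, hA, hs⟩ := hx.supp_spec f
  have haA : a ∈ A := by rw [hs] at ha; exact ha
  obtain ⟨α, hα, hmin⟩ := A.exists_min_image (kappa w) ⟨a, haA⟩
  set c := wt w α with hc
  have hIc : I ≤ J x {b | c < wt w b} := hI.trans (J_mono x fun u hu =>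
    lt_of_le_of_lt (wt_le_of_kappa (hmin a haA)) (hlt u hu))
  have hfc : f ∈ J x {b | c ≤ wt w b} := by
    rw [hx.supp_iff (wt_upper hw c), hs]
    exact fun b hb => wt_le_of_kappa (hmin b hb)
  obtain ⟨⟨h, r, hh, hr, hrep⟩, -⟩ := hA
  have hlead : IsLead x (kappa w) (h * f) α := by
    refine ⟨r α, hr α hα, ?_⟩
    rw [hrep, ← Finset.add_sum_erase _ _ hα, add_sub_cancel_left]
    refine Ideal.sum_mem _ fun b hb => mul_mono_mem x ?_ _
    rw [Finset.mem_erase] at hb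
    exact lt_of_le_of_ne (hmin b hb.2) fun h => hb.1 (kappa_inj h).symm
  obtain ⟨n, hn, q, hq, heq⟩ := hf
  have hfn : f ^ n ∈ J x {b | n * c < wt w b} := by
    rw [eq_neg_of_add_eq_zero_left heq]
    refine neg_mem (Ideal.sum_mem _ fun i hi => ?_)
    have h1 := hq i hi
    rw [Finset.mem_Icc] at hi
    obtain ⟨k, rfl⟩ : ∃ k, i = k + 1 := ⟨i - 1, by omega⟩
    refine mul_mem_J x ?_ (ideal_pow_wt hIc k h1) (pow_mem_wt hfc (n - (k + 1)))
    intro a ha b hb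
    have ha : ((k + 1 : ℕ) : ℝ) * c < wt w a := ha
    have hb : ((n - (k + 1) : ℕ) : ℝ) * c ≤ wt w b := hb
    change (n : ℝ) * c < wt w (a + b)
    rw [Nat.cast_sub hi.2] at hb
    rw [wt_add]; linarith
  refine (hlead.pow hx n).not_mem hx (kappa_mono hw) ?_
  rw [mul_pow]
  refine Ideal.mul_mem_left _ _ (J_mono x (fun b hb => ?_) hfn)
  have hb : n * c < wt w b := hb
  have hwn : wt w (n • α) = n * c := by
    simp only [hc, wt, Finset.mul_sum, Pi.smul_apply, smul_eq_mul]
    refine Finset.sum_congr rfl fun i _ => ?_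
    push_cast; ring
  exact kappa_lt_of_wt (by rw [hwn]; exact hb)

/-! ### Newton polyhedra -/

/-- support of an ideal -/
def SI (x : Fin p → R) (I : Ideal R) : Set (Fin p → ℕ) := ⋃ f ∈ (I : Set R), supp x f

lemma ΓI_eq (x : Fin p → R) (I : Ideal R) : ΓI x I = convexHull ℝ (toR '' SI x I) := rfl

lemma mem_SI {x : Fin p → R} {I : Ideal R} {a} : a ∈ SI x I ↔ ∃ f ∈ I, a ∈ supp x f := by
  simp [SI]

section final

variable {x : Fin p → R}

lemma Good.SI_upper (hx : Good x) (I : Ideal R) : IsUpperSet (SI x I) := by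
  intro a b hab ha
  rw [mem_SI] at ha ⊢
  obtain ⟨f, hf, ha⟩ := ha
  obtain ⟨c, rfl⟩ := exists_add_of_le hab
  exact ⟨f * mono x c, Ideal.mul_mem_right _ _ hf, hx.supp_mul_mono c ha⟩

lemma Good.le_J_iff (hx : Good x) {I : Ideal R} {U : Set (Fin p → ℕ)} (hU : IsUpperSet U) :
    I ≤ J x U ↔ SI x I ⊆ U := by
  constructor
  · intro h a ha
    obtain ⟨f, hf, ha⟩ := mem_SI.1 ha
    exact (hx.supp_iff hU).1 (h hf) ha
  · intro h f hf
    exact (hx.supp_iff hU).2 fun a ha => h (mem_SI.2 ⟨f, hf, ha⟩)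

/-- lattice points of the Newton polyhedron -/
def latt (x : Fin p → R) (I : Ideal R) : Set (Fin p → ℕ) := {a | toR a ∈ ΓI x I}

lemma Good.latt_upper (hx : Good x) (I : Ideal R) : IsUpperSet (latt x I) := by
  intro a b hab ha
  obtain ⟨c, rfl⟩ := exists_add_of_le hab
  change toR (a + c) ∈ ΓI x I
  rw [toR_add]
  exact hull_add_nat (hx.SI_upper I) ha c

lemma idealZero_eq (x : Fin p → R) (I : Ideal R) : idealZero x I = J x (latt x I) := rfl

lemma ΓI_subset_iff {x : Fin p → R} {I K : Ideal R} : ΓI x K ⊆ ΓI x I ↔ SI x K ⊆ latt x I := by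
  rw [ΓI_eq x K]
  constructor
  · intro h a ha
    exact h (subset_convexHull ℝ _ ⟨a, ha, rfl⟩)
  · intro h
    refine convexHull_min ?_ (convex_convexHull ℝ _)
    rintro _ ⟨a, ha, rfl⟩
    exact h ha

lemma Good.ΓI_subset_iff (hx : Good x) {I K : Ideal R} :
    ΓI x K ⊆ ΓI x I ↔ K ≤ idealZero x I := by
  rw [NND.ΓI_subset_iff, idealZero_eq, hx.le_J_iff (hx.latt_upper I)]

lemma Good.ΓE_subset_iff (hx : Good x) {I : Ideal R} {f : R} :
    ΓE x f ⊆ ΓI x I ↔ f ∈ idealZero x I := by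
  rw [ΓE, hx.ΓI_subset_iff, Ideal.span_singleton_le_iff_mem]

lemma Good.icl_le (hx : Good x) (I : Ideal R) : icl I ≤ idealZero x I := by
  intro f hf
  rw [idealZero_eq, hx.supp_iff (hx.latt_upper I)]
  intro a ha
  exact hx.supp_icl (hx.SI_upper I) ((hx.le_J_iff (hx.SI_upper I)).2 subset_rfl) hf ha

lemma KIdeal_eq (x : Fin p → R) (I : Ideal R) :
    KIdeal x I = J x {a | mono x a ∈ intClosure I} := by
  rw [KIdeal, J]
  congr 1
  ext m
  constructor
  · rintro ⟨⟨a, rfl⟩, h⟩; exact ⟨a, h, rfl⟩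
  · rintro ⟨a, h, rfl⟩; exact ⟨⟨a, rfl⟩, h⟩

lemma KIdeal_le (x : Fin p → R) (I : Ideal R) : KIdeal x I ≤ icl I := by
  rw [KIdeal, Ideal.span_le]
  exact fun m hm => hm.2

end final

/-- characterizations of ideals with monomial integral closure. -/
theorem monomial_intClosure_tfae {R : Type*} [CommRing R] {p : ℕ}
    (x : Fin p → R) (hR : IsRegularDomain R) (hx : IsGRSOP x) (I : Ideal R) :
    [ (∃ A : Set (Fin p → ℕ), intClosure I = ↑(Ideal.span (mono x '' A))),
      (↑(idealZero x I) ⊆ intClosure I),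
      (intClosure I = {f : R | ΓE x f ⊆ ΓI x I}),
      (ΓI x I = ΓI x (KIdeal x I)) ].TFAE := by
  have hg := good_of x hR hx
  have h3 : {f : R | ΓE x f ⊆ ΓI x I} = (idealZero x I : Set R) := by
    ext f; exact hg.ΓE_subset_iff
  rw [h3]
  tfae_have 2 → 3 := fun h => subset_antisymm (hg.icl_le I) h
  tfae_have 3 → 1 := fun h => ⟨latt x I, h⟩
  tfae_have 1 → 4 := by
    rintro ⟨A, hA⟩
    have hAm : ∀ a ∈ A, mono x a ∈ intClosure I := fun a ha => by
      rw [hA]; exact mono_mem_J x ha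
    have hle : icl I ≤ KIdeal x I := by
      intro f hf
      have hf' : f ∈ intClosure I := hf
      rw [hA] at hf'
      rw [KIdeal_eq]
      exact J_mono x hAm hf'
    apply subset_antisymm
    · rw [hg.ΓI_subset_iff, idealZero_eq]
      refine (le_icl I).trans (hle.trans ?_)
      exact hg.ΓI_subset_iff.1 subset_rfl
    · rw [hg.ΓI_subset_iff]
      exact (KIdeal_le x I).trans (hg.icl_le I)
  tfae_have 4 → 2 := by
    intro h4
    have hU : IsUpperSet {a | mono x a ∈ intClosure I} := by
      intro a b hab ha
      obtain ⟨c, rfl⟩ := exists_add_of_le hab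
      change mono x (a + c) ∈ intClosure I
      rw [mono_add, mul_comm]
      exact intClosure_mul I _ ha
    have hsub : SI x (KIdeal x I) ⊆ {a | mono x a ∈ intClosure I} :=
      (hg.le_J_iff hU).1 (KIdeal_eq x I).le
    have hle : idealZero x I ≤ icl I := by
      rw [idealZero, Ideal.span_le]
      rintro _ ⟨a, ha, rfl⟩
      have ha : toR a ∈ ΓI x I := ha
      rw [h4, ΓI_eq] at ha
      obtain ⟨ι, t, u, n, hu, hpos, heq⟩ := lattice_hull (convexHull_mono (Set.image_mono hsub) ha)
      exact mono_mem_icl x I t u n hu a hpos heq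
    exact hle
  tfae_finish

end NND
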